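/- arXiv:2001.01836 — 3 statements merged into one kernel-verified Lean document; each statement's English description precedes it below -/
import Mathlib

section
/- Let h* = (h1*, …, hn*) with h1* < h2* < … < hn* be a local maximum of the mutual information I_n over the open set of strictly ordered thresholding vectors. Assume φ0 and φ1 are continuous, that A11(h*), A22(h*), q0(h*) all lie in the open interval (0,1), that φ1(hi*) > 0 for every i, and that q0(h*) ≠ A11(h*). Then the likelihood ratio is the same at every threshold: for all i, j ∈ {1,…,n}, φ0(hi*)/φ1(hi*) = φ0(hj*)/φ1(hj*); moreover this common value equals r* = −(p1/p0) · (log((1−q0(h*))/q0(h*)) + log((1−A22(h*))/A22(h*))) / (log((1−q0(h*))/q0(h*)) − log((1−A11(h*))/A11(h*))). -/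
open MeasureTheory Real Set Filter

/-- Binary entropy function. -/
noncomputable def Hb (w : ℝ) : ℝ := -(w * Real.log w) - (1 - w) * Real.log (1 - w)

/-- The union of the odd-indexed pieces of the partition of ℝ induced by the
thresholds `h 0 < h 1 < ⋯ < h (n-1)`, i.e. `(-∞, h 0) ∪ [h 1, h 2) ∪ ⋯`:
a point `y` belongs to it iff the number of thresholds `≤ y` is even. -/
def oddUnion {n : ℕ} (h : Fin n → ℝ) : Set ℝ :=
  {y | Even (Finset.univ.filter (fun i => h i ≤ y)).card}

noncomputable def A11 (φ0 : ℝ → ℝ) {n : ℕ} (h : Fin n → ℝ) : ℝ := ∫ y in oddUnion h, φ0 y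

noncomputable def A22 (φ1 : ℝ → ℝ) {n : ℕ} (h : Fin n → ℝ) : ℝ := ∫ y in (oddUnion h)ᶜ, φ1 y

noncomputable def q0 (p0 p1 : ℝ) (φ0 φ1 : ℝ → ℝ) {n : ℕ} (h : Fin n → ℝ) : ℝ :=
  p0 * A11 φ0 h + p1 * (1 - A22 φ1 h)

/-- Mutual information of the quantizer with thresholding vector `h`. -/
noncomputable def MI (p0 p1 : ℝ) (φ0 φ1 : ℝ → ℝ) {n : ℕ} (h : Fin n → ℝ) : ℝ :=
  Hb (q0 p0 p1 φ0 φ1 h) - p0 * Hb (A11 φ0 h) - p1 * Hb (A22 φ1 h)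

/-!
The sign `(-1) ^ #{j | h j ≤ y}` is `1` on `oddUnion h` and `-1` off it, and it factors over the
thresholds. When only the threshold `h i` moves to `t`, the factor `ε` of the others is fixed, so
`∫ y in oddUnion h, φ y` equals `∫ y in Iic t, ε y • φ y` up to a constant. Near `h i` the sign `ε`
is constant, and its value there is the same for `φ0` and `φ1`: it factors out of the partial
derivative of the mutual information. At an extremum what remains is a linear relation between
`φ0 (h i)` and `φ1 (h i)` whose coefficients do not depend on `i`; as `q0 ≠ A11`, the coefficient of
`φ0 (h i)` is nonzero because the derivative of the binary entropy is injective on `(0, 1)`.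
-/

open scoped Topology

lemma isOpen_setOf_strictMono {ι α : Type*} [Finite ι] [Preorder ι] [TopologicalSpace α]
    [LinearOrder α] [OrderClosedTopology α] : IsOpen {h : ι → α | StrictMono h} := by
  simp only [StrictMono, ofPred_forall]
  exact isOpen_iInter_of_finite fun a ↦ isOpen_iInter_of_finite fun b ↦
    isOpen_iInter_of_finite fun _ ↦ isOpen_lt (continuous_apply a) (continuous_apply b)

section ParitySign

variable {ι α : Type*} [LinearOrder α]

/-- The sign `(-1) ^ #{j ∈ s | h j ≤ y}`, recording the parity of the number of thresholds indexed
by `s` that are at most `y`. The product form splits off one threshold at a time. -/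
def paritySign (s : Finset ι) (h : ι → α) (y : α) : ℝ :=
  ∏ j ∈ s, if h j ≤ y then -1 else 1

lemma paritySign_eq_neg_one_pow_card (s : Finset ι) (h : ι → α) (y : α) :
    paritySign s h y = (-1) ^ (s.filter fun j ↦ h j ≤ y).card := by
  simp [paritySign, Finset.prod_ite]

lemma abs_paritySign (s : Finset ι) (h : ι → α) (y : α) : |paritySign s h y| = 1 := by
  rw [paritySign_eq_neg_one_pow_card, abs_neg_one_pow]

lemma paritySign_ne_zero (s : Finset ι) (h : ι → α) (y : α) : paritySign s h y ≠ 0 := by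
  rw [paritySign_eq_neg_one_pow_card]
  exact pow_ne_zero _ (by norm_num)

lemma paritySign_update_of_mem [DecidableEq ι] {s : Finset ι} {i : ι} (hi : i ∈ s) (h : ι → α)
    (t y : α) :
    paritySign s (Function.update h i t) y =
      (if t ≤ y then -1 else 1) * paritySign (s.erase i) h y := by
  rw [paritySign, ← Finset.mul_prod_erase _ _ hi, Function.update_self, paritySign]
  congr 1
  refine Finset.prod_congr rfl fun j hj ↦ ?_
  rw [Function.update_of_ne (Finset.ne_of_mem_erase hj)]

variable [TopologicalSpace α]

lemma measurable_paritySign [ClosedIciTopology α] [MeasurableSpace α] [OpensMeasurableSpace α]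
    (s : Finset ι) (h : ι → α) : Measurable (paritySign s h) :=
  Finset.measurable_fun_prod s fun _ _ ↦
    Measurable.ite measurableSet_Ici measurable_const measurable_const

lemma eventually_le_iff_of_ne [OrderClosedTopology α] {a b : α} (hab : a ≠ b) :
    ∀ᶠ y in 𝓝 b, (a ≤ y ↔ a ≤ b) := by
  rcases hab.lt_or_gt with hlt | hgt
  · filter_upwards [eventually_gt_nhds hlt] with y hy using iff_of_true hy.le hlt.le
  · filter_upwards [eventually_lt_nhds hgt] with y hy using iff_of_false hy.not_ge hgt.not_ge

lemma paritySign_eventuallyEq_const [OrderClosedTopology α] {s : Finset ι} {h : ι → α} {a : α}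
    (hs : ∀ j ∈ s, h j ≠ a) : paritySign s h =ᶠ[𝓝 a] fun _ ↦ paritySign s h a := by
  have same_side : ∀ᶠ y in 𝓝 a, ∀ j ∈ s, (h j ≤ y ↔ h j ≤ a) :=
    (eventually_all_finset s).2 fun j hj ↦ eventually_le_iff_of_ne (hs j hj)
  filter_upwards [same_side] with y hy
  exact Finset.prod_congr rfl fun j hj ↦ by simp only [hy j hj]

end ParitySign

section ThresholdIntegral

variable {E : Type*} [NormedAddCommGroup E] [NormedSpace ℝ E] {n : ℕ} {h : Fin n → ℝ} {i : Fin n}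
  {φ ψ : ℝ → E} {a : ℝ}

lemma oddUnion_eq_setOf_paritySign_eq_one (h : Fin n → ℝ) :
    oddUnion h = {y | paritySign Finset.univ h y = 1} := by
  ext y
  change Even _ ↔ paritySign Finset.univ h y = 1
  rw [paritySign_eq_neg_one_pow_card, neg_one_pow_eq_one_iff_even (by norm_num)]

lemma measurableSet_oddUnion (h : Fin n → ℝ) : MeasurableSet (oddUnion h) := by
  rw [oddUnion_eq_setOf_paritySign_eq_one]
  exact measurableSet_eq_fun (measurable_paritySign _ h) measurable_const

lemma indicator_oddUnion (h : Fin n → ℝ) (φ : ℝ → E) (y : ℝ) :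
    (oddUnion h).indicator φ y = (2⁻¹ : ℝ) • (φ y + paritySign Finset.univ h y • φ y) := by
  by_cases hy : y ∈ oddUnion h
  · have hsign : paritySign Finset.univ h y = 1 := by
      rwa [oddUnion_eq_setOf_paritySign_eq_one] at hy
    rw [indicator_of_mem hy, hsign]
    module
  · have hsign : paritySign Finset.univ h y = -1 := by
      rw [oddUnion_eq_setOf_paritySign_eq_one] at hy
      exact (eq_or_eq_neg_of_abs_eq (abs_paritySign _ h y)).resolve_left hy
    rw [indicator_of_notMem hy, hsign]
    module

lemma integrable_paritySign_smul {ι : Type*} {μ : Measure ℝ} (hφ : Integrable φ μ) (s : Finset ι)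
    (h : ι → ℝ) : Integrable (fun y ↦ paritySign s h y • φ y) μ :=
  hφ.bdd_smul 1 (measurable_paritySign s h).aestronglyMeasurable
    (ae_of_all _ fun y ↦ (abs_paritySign s h y).le)

lemma setIntegral_oddUnion {μ : Measure ℝ} (hφ : Integrable φ μ) (h : Fin n → ℝ) :
    ∫ y in oddUnion h, φ y ∂μ =
      (2⁻¹ : ℝ) • ((∫ y, φ y ∂μ) + ∫ y, paritySign Finset.univ h y • φ y ∂μ) := by
  rw [← integral_indicator (measurableSet_oddUnion h)]
  simp_rw [indicator_oddUnion]
  rw [integral_smul, integral_add hφ (integrable_paritySign_smul hφ _ h)]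

lemma integral_ite_le_neg_one_smul {μ : Measure ℝ} [NullSingletonClass μ] (hψ : Integrable ψ μ)
    (t : ℝ) :
    ∫ y, (if t ≤ y then -1 else 1 : ℝ) • ψ y ∂μ =
      (2 : ℝ) • (∫ y in Iic t, ψ y ∂μ) - ∫ y, ψ y ∂μ := by
  have hsplit (y : ℝ) : (if t ≤ y then -1 else 1 : ℝ) • ψ y =
      (2 : ℝ) • (Iio t).indicator ψ y - ψ y := by
    by_cases hty : t ≤ y
    · simp [hty]
    · rw [if_neg hty, indicator_of_mem (mem_Iio.2 (not_le.1 hty))]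
      module
  have hint : Integrable (fun y ↦ (2 : ℝ) • (Iio t).indicator ψ y) μ :=
    (hψ.indicator measurableSet_Iio).smul (2 : ℝ)
  simp_rw [hsplit]
  rw [integral_sub hint hψ, integral_smul,
    integral_indicator measurableSet_Iio, integral_Iic_eq_integral_Iio]

lemma setIntegral_oddUnion_update {μ : Measure ℝ} [NullSingletonClass μ] (hφ : Integrable φ μ)
    (h : Fin n → ℝ) (i : Fin n) (t : ℝ) :
    ∫ y in oddUnion (Function.update h i t), φ y ∂μ =
      (2⁻¹ : ℝ) •
          ((∫ y, φ y ∂μ) - ∫ y, paritySign (Finset.univ.erase i) h y • φ y ∂μ) +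
        ∫ y in Iic t, paritySign (Finset.univ.erase i) h y • φ y ∂μ := by
  rw [setIntegral_oddUnion hφ]
  simp_rw [paritySign_update_of_mem (Finset.mem_univ i), mul_smul]
  rw [integral_ite_le_neg_one_smul (integrable_paritySign_smul hφ _ h)]
  module

variable [CompleteSpace E]

lemma hasDerivAt_integral_Iic (hψ : Integrable ψ) (hcont : ContinuousAt ψ a) :
    HasDerivAt (fun t ↦ ∫ y in Iic t, ψ y) (ψ a) a := by
  have hsplit (t : ℝ) : ∫ y in Iic t, ψ y = (∫ y in Iic a, ψ y) + ∫ y in a..t, ψ y := by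
    rw [← intervalIntegral.integral_Iic_sub_Iic hψ.integrableOn hψ.integrableOn,
      add_sub_cancel]
  rw [funext hsplit]
  exact (intervalIntegral.integral_hasDerivAt_right hψ.intervalIntegrable
    hψ.aestronglyMeasurable.stronglyMeasurableAtFilter hcont).const_add _

lemma hasDerivAt_setIntegral_oddUnion_update (hsep : ∀ j ≠ i, h j ≠ h i) (hφ : Integrable φ)
    (hcont : ContinuousAt φ (h i)) :
    HasDerivAt (fun t ↦ ∫ y in oddUnion (Function.update h i t), φ y)
      (paritySign (Finset.univ.erase i) h (h i) • φ (h i)) (h i) := by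
  have hsign : ContinuousAt (paritySign (Finset.univ.erase i) h) (h i) :=
    continuousAt_const.congr (paritySign_eventuallyEq_const fun j hj ↦
      hsep j (Finset.ne_of_mem_erase hj)).symm
  simp_rw [setIntegral_oddUnion_update hφ]
  exact (hasDerivAt_integral_Iic (integrable_paritySign_smul hφ _ h)
    (hsign.smul hcont)).const_add _

end ThresholdIntegral

section EntropySlope

/-- The derivative of the binary entropy at `w ∈ (0, 1)`, the function through which all the
logarithms in the formula for `r*` arise. -/
noncomputable def entropySlope (w : ℝ) : ℝ := Real.log ((1 - w) / w)

lemma Hb_eq_binEntropy : Hb = Real.binEntropy := by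
  funext w
  simp only [Hb, Real.binEntropy, Real.log_inv]
  ring

lemma hasDerivAt_Hb {w : ℝ} (hw : w ∈ Ioo (0 : ℝ) 1) : HasDerivAt Hb (entropySlope w) w := by
  rw [Hb_eq_binEntropy, entropySlope, Real.log_div (sub_pos.2 hw.2).ne' hw.1.ne']
  exact Real.hasDerivAt_binEntropy hw.1.ne' hw.2.ne

lemma injOn_entropySlope : InjOn entropySlope (Ioo 0 1) := by
  rintro v ⟨hv0, hv1⟩ w ⟨hw0, hw1⟩ hvw
  have hodds : (1 - v) / v = (1 - w) / w :=
    Real.log_injOn_pos (div_pos (sub_pos.2 hv1) hv0) (div_pos (sub_pos.2 hw1) hw0) hvw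
  rw [div_eq_div_iff hv0.ne' hw0.ne'] at hodds
  linarith

end EntropySlope

section MutualInformation

variable {p0 p1 : ℝ} {φ0 φ1 : ℝ → ℝ} {n : ℕ} {h : Fin n → ℝ} {i : Fin n}

lemma hasDerivAt_A11_update (hsep : ∀ j ≠ i, h j ≠ h i) (hi0 : Integrable φ0)
    (hc0 : ContinuousAt φ0 (h i)) :
    HasDerivAt (fun t ↦ A11 φ0 (Function.update h i t))
      (paritySign (Finset.univ.erase i) h (h i) * φ0 (h i)) (h i) :=
  hasDerivAt_setIntegral_oddUnion_update hsep hi0 hc0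

lemma hasDerivAt_A22_update (hsep : ∀ j ≠ i, h j ≠ h i) (hi1 : Integrable φ1)
    (hc1 : ContinuousAt φ1 (h i)) :
    HasDerivAt (fun t ↦ A22 φ1 (Function.update h i t))
      (-(paritySign (Finset.univ.erase i) h (h i) * φ1 (h i))) (h i) := by
  simp_rw [A22, setIntegral_compl (measurableSet_oddUnion _) hi1]
  exact (hasDerivAt_setIntegral_oddUnion_update hsep hi1 hc1).const_sub _

lemma hasDerivAt_q0_update (hsep : ∀ j ≠ i, h j ≠ h i) (hi0 : Integrable φ0)
    (hi1 : Integrable φ1) (hc0 : ContinuousAt φ0 (h i)) (hc1 : ContinuousAt φ1 (h i)) :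
    HasDerivAt (fun t ↦ q0 p0 p1 φ0 φ1 (Function.update h i t))
      (paritySign (Finset.univ.erase i) h (h i) * (p0 * φ0 (h i) + p1 * φ1 (h i))) (h i) := by
  convert! ((hasDerivAt_A11_update hsep hi0 hc0).const_mul p0).add
    (((hasDerivAt_A22_update hsep hi1 hc1).const_sub 1).const_mul p1) using 1
  ring

lemma hasDerivAt_MI_update (hsep : ∀ j ≠ i, h j ≠ h i) (hi0 : Integrable φ0)
    (hi1 : Integrable φ1) (hc0 : ContinuousAt φ0 (h i)) (hc1 : ContinuousAt φ1 (h i))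
    (hA11 : A11 φ0 h ∈ Ioo 0 1) (hA22 : A22 φ1 h ∈ Ioo 0 1)
    (hq0 : q0 p0 p1 φ0 φ1 h ∈ Ioo 0 1) :
    HasDerivAt (fun t ↦ MI p0 p1 φ0 φ1 (Function.update h i t))
      (paritySign (Finset.univ.erase i) h (h i) *
        (p0 * φ0 (h i) * (entropySlope (q0 p0 p1 φ0 φ1 h) - entropySlope (A11 φ0 h)) +
          p1 * φ1 (h i) * (entropySlope (q0 p0 p1 φ0 φ1 h) + entropySlope (A22 φ1 h))))
      (h i) := by
  have hupdate : h = Function.update h i (h i) := (Function.update_eq_self i h).symm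
  have hHq0 := (hasDerivAt_Hb hq0).comp_of_eq (h i)
    (hasDerivAt_q0_update hsep hi0 hi1 hc0 hc1) (congrArg (q0 p0 p1 φ0 φ1) hupdate)
  have hHA11 := (hasDerivAt_Hb hA11).comp_of_eq (h i)
    (hasDerivAt_A11_update hsep hi0 hc0) (congrArg (A11 φ0) hupdate)
  have hHA22 := (hasDerivAt_Hb hA22).comp_of_eq (h i)
    (hasDerivAt_A22_update hsep hi1 hc1) (congrArg (A22 φ1) hupdate)
  convert! (hHq0.sub (hHA11.const_mul p0)).sub (hHA22.const_mul p1) using 1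
  ring

lemma stationarity_of_isLocalExtr_MI (hsep : ∀ j ≠ i, h j ≠ h i) (hi0 : Integrable φ0)
    (hi1 : Integrable φ1) (hc0 : ContinuousAt φ0 (h i)) (hc1 : ContinuousAt φ1 (h i))
    (hextr : IsLocalExtr (MI p0 p1 φ0 φ1) h)
    (hA11 : A11 φ0 h ∈ Ioo 0 1) (hA22 : A22 φ1 h ∈ Ioo 0 1)
    (hq0 : q0 p0 p1 φ0 φ1 h ∈ Ioo 0 1) :
    p0 * φ0 (h i) * (entropySlope (q0 p0 p1 φ0 φ1 h) - entropySlope (A11 φ0 h)) +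
      p1 * φ1 (h i) * (entropySlope (q0 p0 p1 φ0 φ1 h) + entropySlope (A22 φ1 h)) = 0 := by
  have hline : IsLocalExtr (fun t ↦ MI p0 p1 φ0 φ1 (Function.update h i t)) (h i) := by
    rw [← Function.update_eq_self i h] at hextr
    exact hextr.comp_continuous (hasDerivAt_update h i (h i)).continuousAt
  have hderiv := hline.hasDerivAt_eq_zero
    (hasDerivAt_MI_update hsep hi0 hi1 hc0 hc1 hA11 hA22 hq0)
  exact (mul_eq_zero.1 hderiv).resolve_left (paritySign_ne_zero _ h (h i))

end MutualInformation

theorem stmt_0_general {p0 p1 : ℝ} (hp0 : p0 ≠ 0) {φ0 φ1 : ℝ → ℝ} (hi0 : Integrable φ0)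
    (hi1 : Integrable φ1) {n : ℕ} {h : Fin n → ℝ} {i : Fin n} (hsep : ∀ j ≠ i, h j ≠ h i)
    (hc0 : ContinuousAt φ0 (h i)) (hc1 : ContinuousAt φ1 (h i)) (hφ1 : φ1 (h i) ≠ 0)
    (hextr : IsLocalExtr (MI p0 p1 φ0 φ1) h)
    (hA11 : A11 φ0 h ∈ Ioo 0 1) (hA22 : A22 φ1 h ∈ Ioo 0 1)
    (hq0 : q0 p0 p1 φ0 φ1 h ∈ Ioo 0 1) (hne : q0 p0 p1 φ0 φ1 h ≠ A11 φ0 h) :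
    φ0 (h i) / φ1 (h i) =
      -(p1 / p0) *
        ((entropySlope (q0 p0 p1 φ0 φ1 h) + entropySlope (A22 φ1 h)) /
          (entropySlope (q0 p0 p1 φ0 φ1 h) - entropySlope (A11 φ0 h))) := by
  have hslope : entropySlope (q0 p0 p1 φ0 φ1 h) - entropySlope (A11 φ0 h) ≠ 0 :=
    sub_ne_zero.2 (injOn_entropySlope.ne hq0 hA11 hne)
  have hstat := stationarity_of_isLocalExtr_MI hsep hi0 hi1 hc0 hc1 hextr hA11 hA22 hq0
  field_simp
  linear_combination hstat

theorem stmt_0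
    (p0 p1 : ℝ) (hp0 : p0 ∈ Set.Ioo (0:ℝ) 1) (hp1 : p1 ∈ Set.Ioo (0:ℝ) 1)
    (hp : p0 + p1 = 1)
    (φ0 φ1 : ℝ → ℝ) (hφ0 : ∀ y, 0 ≤ φ0 y) (hφ1 : ∀ y, 0 ≤ φ1 y)
    (hi0 : Integrable φ0) (hi1 : Integrable φ1)
    (hI0 : ∫ y, φ0 y = 1) (hI1 : ∫ y, φ1 y = 1)
    (hc0 : Continuous φ0) (hc1 : Continuous φ1)
    (n : ℕ) (hn : 0 < n) (hstar : Fin n → ℝ) (hmono : StrictMono hstar)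
    (hmax : IsLocalMaxOn (fun h : Fin n → ℝ => MI p0 p1 φ0 φ1 h)
      {h : Fin n → ℝ | StrictMono h} hstar)
    (hA11 : A11 φ0 hstar ∈ Set.Ioo (0:ℝ) 1)
    (hA22 : A22 φ1 hstar ∈ Set.Ioo (0:ℝ) 1)
    (hq0 : q0 p0 p1 φ0 φ1 hstar ∈ Set.Ioo (0:ℝ) 1)
    (hpos : ∀ i, 0 < φ1 (hstar i))
    (hne : q0 p0 p1 φ0 φ1 hstar ≠ A11 φ0 hstar) :
    (∀ i j : Fin n, φ0 (hstar i) / φ1 (hstar i) = φ0 (hstar j) / φ1 (hstar j)) ∧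
    (∀ i : Fin n, φ0 (hstar i) / φ1 (hstar i) =
      -(p1 / p0) *
        ((Real.log ((1 - q0 p0 p1 φ0 φ1 hstar) / q0 p0 p1 φ0 φ1 hstar) +
            Real.log ((1 - A22 φ1 hstar) / A22 φ1 hstar)) /
          (Real.log ((1 - q0 p0 p1 φ0 φ1 hstar) / q0 p0 p1 φ0 φ1 hstar) -
            Real.log ((1 - A11 φ0 hstar) / A11 φ0 hstar)))) := by
  have ratio (i : Fin n) := stmt_0_general hp0.1.ne' hi0 hi1 (i := i)
    (fun _ hj ↦ hmono.injective.ne hj) hc0.continuousAt hc1.continuousAt (hpos i).ne'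
    (.inr (hmax.isLocalMax (isOpen_setOf_strictMono.mem_nhds hmono))) hA11 hA22 hq0 hne
  exact ⟨fun i j ↦ (ratio i).trans (ratio j).symm, ratio⟩
end

section
/- Let p0, p1 ∈ (0,1) with p0 + p1 = 1, a ∈ (0,1), and f, g ∈ (0,1). Set B = p0·f·(1−f) + p1·g·(1−g). Then the following identity and inequality hold: 1/(f·(1−f)) + p1³·(1−a)²/(p0³·a²·g·(1−g)) − (p0²·a + p1²·(1−a))²/(p0³·a²·B) = p0·p1·(p0·a·g·(1−g) − p1·(1−a)·f·(1−f))² / (p0³·a²·f·(1−f)·g·(1−g)·B) ≥ 0. -/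
/-!
The expression is the defect in Sedrakyan's inequality `(s + t)² / (x + y) ≤ s² / x + t² / y`,
which equals `(s * y - t * x)² / (x * y * (x + y))`. It is taken at numerators `p0² a` and
`p1² (1 - a)` and denominators `p0 f (1 - f)` and `p1 g (1 - g)`, whose sum is `B`, and then
divided by `p0³ a²`.
-/

section Field

variable {K : Type*} [Field K]

theorem sq_div_add_sq_div_sub_sq_add_div {x y : K} (hx : x ≠ 0) (hy : y ≠ 0) (hxy : x + y ≠ 0)
    (s t : K) :
    s ^ 2 / x + t ^ 2 / y - (s + t) ^ 2 / (x + y) =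
      (s * y - t * x) ^ 2 / (x * y * (x + y)) := by
  field_simp
  ring

theorem one_div_add_sq_div_sub_sq_add_div {p q a x y : K} (hp : p ≠ 0) (hq : q ≠ 0) (ha : a ≠ 0)
    (hx : x ≠ 0) (hy : y ≠ 0) (hxy : p * x + q * y ≠ 0) (b : K) :
    1 / x + q ^ 3 * b ^ 2 / (p ^ 3 * a ^ 2 * y) -
        (p ^ 2 * a + q ^ 2 * b) ^ 2 / (p ^ 3 * a ^ 2 * (p * x + q * y)) =
      p * q * (p * a * y - q * b * x) ^ 2 /
        (p ^ 3 * a ^ 2 * x * y * (p * x + q * y)) :=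
  calc
    _ = ((p ^ 2 * a) ^ 2 / (p * x) + (q ^ 2 * b) ^ 2 / (q * y) -
          (p ^ 2 * a + q ^ 2 * b) ^ 2 / (p * x + q * y)) / (p ^ 3 * a ^ 2) := by
      field_simp
    _ = (p ^ 2 * a * (q * y) - q ^ 2 * b * (p * x)) ^ 2 /
          (p * x * (q * y) * (p * x + q * y)) / (p ^ 3 * a ^ 2) := by
      rw [sq_div_add_sq_div_sub_sq_add_div (mul_ne_zero hp hx) (mul_ne_zero hq hy) hxy]
    _ = (p * q * (p * a * y - q * b * x)) ^ 2 /
          (p * x * (q * y) * (p * x + q * y)) / (p ^ 3 * a ^ 2) := by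
      congr 3
      ring
    _ = _ := by
      field_simp

end Field

theorem stmt_11_general {K : Type*} [Field K] [LinearOrder K] [IsStrictOrderedRing K]
    {p0 p1 a x y : K} (hp0 : 0 < p0) (hp1 : 0 < p1) (ha : a ≠ 0) (hx : 0 < x) (hy : 0 < y)
    (b : K) :
    (1 / x + p1 ^ 3 * b ^ 2 / (p0 ^ 3 * a ^ 2 * y) -
        (p0 ^ 2 * a + p1 ^ 2 * b) ^ 2 / (p0 ^ 3 * a ^ 2 * (p0 * x + p1 * y)) =
      p0 * p1 * (p0 * a * y - p1 * b * x) ^ 2 /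
        (p0 ^ 3 * a ^ 2 * x * y * (p0 * x + p1 * y))) ∧
    0 ≤ p0 * p1 * (p0 * a * y - p1 * b * x) ^ 2 /
        (p0 ^ 3 * a ^ 2 * x * y * (p0 * x + p1 * y)) := by
  have hB : 0 < p0 * x + p1 * y := by positivity
  exact ⟨one_div_add_sq_div_sub_sq_add_div hp0.ne' hp1.ne' ha hx.ne' hy.ne' hB.ne' b,
    by positivity⟩

/-- the algebraic identity and nonnegativity establishing `G(a) ≥ 0`,
where `B = p0·f·(1−f) + p1·g·(1−g)`. -/
theorem stmt_11
    (p0 p1 a f g : ℝ) (hp0 : p0 ∈ Set.Ioo (0:ℝ) 1) (hp1 : p1 ∈ Set.Ioo (0:ℝ) 1)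
    (hp : p0 + p1 = 1) (ha : a ∈ Set.Ioo (0:ℝ) 1)
    (hf : f ∈ Set.Ioo (0:ℝ) 1) (hg : g ∈ Set.Ioo (0:ℝ) 1) :
    (1 / (f * (1 - f)) + p1 ^ 3 * (1 - a) ^ 2 / (p0 ^ 3 * a ^ 2 * g * (1 - g)) -
        (p0 ^ 2 * a + p1 ^ 2 * (1 - a)) ^ 2 /
          (p0 ^ 3 * a ^ 2 * (p0 * f * (1 - f) + p1 * g * (1 - g))) =
      p0 * p1 * (p0 * a * g * (1 - g) - p1 * (1 - a) * f * (1 - f)) ^ 2 /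
        (p0 ^ 3 * a ^ 2 * f * (1 - f) * g * (1 - g) *
          (p0 * f * (1 - f) + p1 * g * (1 - g)))) ∧
    0 ≤ p0 * p1 * (p0 * a * g * (1 - g) - p1 * (1 - a) * f * (1 - f)) ^ 2 /
        (p0 ^ 3 * a ^ 2 * f * (1 - f) * g * (1 - g) *
          (p0 * f * (1 - f) + p1 * g * (1 - g))) := by
  simpa only [mul_assoc] using stmt_11_general hp0.1 hp1.1 ha.1.ne'
    (mul_pos hf.1 (sub_pos.mpr hf.2)) (mul_pos hg.1 (sub_pos.mpr hg.2)) (1 - a)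
end

section
/- Let p0, p1 ∈ (0,1) with p0 + p1 = 1 and let f, g : (0,1) → (0,1) be differentiable functions satisfying, for all a ∈ (0,1): f(a) + g(a) ≥ 1, f'(a) > 0, and f'(a) = −(a·p0/((1−a)·p1))·g'(a). Define F(a) = log(f(a)/(1−f(a))) + (p1²·(a−1)/(p0²·a))·log(g(a)/(1−g(a))) − ((p0²·a + p1²·(1−a))/(p0²·a))·log((p0·f(a) + p1·(1−g(a)))/(p0·(1−f(a)) + p1·g(a))). Then F is differentiable with F'(a) ≥ 0 for all a ∈ (0,1); in particular F is nondecreasing on (0,1). -/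
/-- The function `F` whose zero characterizes the stationary points of the mutual
information as a function of the posterior level `a`. -/
noncomputable def Fq (p0 p1 : ℝ) (f g : ℝ → ℝ) (a : ℝ) : ℝ :=
  Real.log (f a / (1 - f a)) +
    (p1 ^ 2 * (a - 1) / (p0 ^ 2 * a)) * Real.log (g a / (1 - g a)) -
    ((p0 ^ 2 * a + p1 ^ 2 * (1 - a)) / (p0 ^ 2 * a)) *
      Real.log ((p0 * f a + p1 * (1 - g a)) / (p0 * (1 - f a) + p1 * g a))

/-!
Write `L x = log (x / (1 - x))`, let `t = (1 - a) p1 / (a p0)`, so that `g' = -t f'`, and let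
`r = p0 f + p1 (1 - g)` and `r' = p0 (1 - f) + p1 g` be the masses of the two quantizer outputs,
so that `F = L f - (p1 / p0) t L g - (1 + (p1 / p0) t) log (r / r')`.

* The coefficient `t` decreases in `a`, so differentiating it contributes a nonnegative multiple
  of `L g + log (r / r')`. This sum is nonnegative since
  `g r - (1 - g) r' = p0 (f + g - 1)`.
* Differentiating the logarithms contributes `f' / p0` times
  `p0 / (f (1 - f)) + p1 t² / (g (1 - g)) - (p0 + p1) (p0 + p1 t)² / (r r')`. By the Cauchy–Schwarz
  inequality the first two terms are at least `(p0 + p1 t)² / (p0 f (1 - f) + p1 g (1 - g))`, and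
  the concavity of `x (1 - x)`, applied to `f` and `1 - g`, concludes.
-/

section Inequalities

theorem add_sq_div_add_le {K : Type*} [Field K] [LinearOrder K] [IsStrictOrderedRing K]
    {x y A B : K} (hA : 0 < A) (hB : 0 < B) :
    (x + y) ^ 2 / (A + B) ≤ x ^ 2 / A + y ^ 2 / B := by
  have hpos : ∀ i ∈ Finset.univ, 0 < ![A, B] i := by simp [Fin.forall_fin_two, hA, hB]
  simpa [Fin.sum_univ_two] using Finset.sq_sum_div_le_sum_sq_div Finset.univ ![x, y] hpos

theorem log_div_add_log_div_nonneg {w x y z : ℝ} (hw : 0 < w) (hx : 0 < x) (hy : 0 < y)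
    (hz : 0 < z) (h : x * z ≤ w * y) : 0 ≤ Real.log (w / x) + Real.log (y / z) := by
  rw [← Real.log_mul (div_pos hw hx).ne' (div_pos hy hz).ne', div_mul_div_comm]
  exact Real.log_nonneg ((one_le_div (mul_pos hx hz)).2 h)

variable {p0 p1 u v : ℝ}

theorem mixture_pos (hp0 : 0 < p0) (hp1 : 0 < p1) (hu : 0 < u) (hv : 0 < v) :
    0 < p0 * u + p1 * v :=
  add_pos (mul_pos hp0 hu) (mul_pos hp1 hv)

theorem log_odds_add_log_mixture_odds_nonneg (hp0 : 0 < p0) (hp1 : 0 < p1)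
    (hu : u ∈ Set.Ioo (0 : ℝ) 1) (hv : v ∈ Set.Ioo (0 : ℝ) 1) (huv : 1 ≤ u + v) :
    0 ≤ Real.log (v / (1 - v)) +
      Real.log ((p0 * u + p1 * (1 - v)) / (p0 * (1 - u) + p1 * v)) := by
  have hu' : 0 < 1 - u := sub_pos.2 hu.2
  have hv' : 0 < 1 - v := sub_pos.2 hv.2
  refine log_div_add_log_div_nonneg hv.1 hv' (mixture_pos hp0 hp1 hu.1 hv')
    (mixture_pos hp0 hp1 hu' hv.1) ?_
  have gap : v * (p0 * u + p1 * (1 - v)) - (1 - v) * (p0 * (1 - u) + p1 * v) =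
      p0 * (u + v - 1) := by ring
  exact sub_nonneg.1 (gap ▸ mul_nonneg hp0.le (sub_nonneg.2 huv))

theorem add_variances_le_mixture_variance (hp0 : 0 ≤ p0) (hp1 : 0 ≤ p1) :
    (p0 + p1) * (p0 * (u * (1 - u)) + p1 * (v * (1 - v))) ≤
      (p0 * u + p1 * (1 - v)) * (p0 * (1 - u) + p1 * v) := by
  have gap : (p0 * u + p1 * (1 - v)) * (p0 * (1 - u) + p1 * v) -
      (p0 + p1) * (p0 * (u * (1 - u)) + p1 * (v * (1 - v))) = p0 * p1 * (u + v - 1) ^ 2 := by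
    ring
  exact sub_nonneg.1 (gap ▸ by positivity)

theorem sq_div_mixture_variance_le (hp0 : 0 < p0) (hp1 : 0 < p1)
    (hu : u ∈ Set.Ioo (0 : ℝ) 1) (hv : v ∈ Set.Ioo (0 : ℝ) 1) (t : ℝ) :
    (p0 + p1) * (p0 + p1 * t) ^ 2 / ((p0 * u + p1 * (1 - v)) * (p0 * (1 - u) + p1 * v)) ≤
      p0 / (u * (1 - u)) + p1 * t ^ 2 / (v * (1 - v)) := by
  have hA : 0 < u * (1 - u) := mul_pos hu.1 (sub_pos.2 hu.2)
  have hB : 0 < v * (1 - v) := mul_pos hv.1 (sub_pos.2 hv.2)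
  calc (p0 + p1) * (p0 + p1 * t) ^ 2 / ((p0 * u + p1 * (1 - v)) * (p0 * (1 - u) + p1 * v))
    _ ≤ (p0 + p1) * (p0 + p1 * t) ^ 2 /
          ((p0 + p1) * (p0 * (u * (1 - u)) + p1 * (v * (1 - v)))) :=
        div_le_div_of_nonneg_left (by positivity)
          (mul_pos (add_pos hp0 hp1) (mixture_pos hp0 hp1 hA hB))
          (add_variances_le_mixture_variance hp0.le hp1.le)
    _ = (p0 + p1 * t) ^ 2 / (p0 * (u * (1 - u)) + p1 * (v * (1 - v))) :=
        mul_div_mul_left _ _ (add_pos hp0 hp1).ne'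
    _ ≤ p0 ^ 2 / (p0 * (u * (1 - u))) + (p1 * t) ^ 2 / (p1 * (v * (1 - v))) :=
        add_sq_div_add_le (mul_pos hp0 hA) (mul_pos hp1 hB)
    _ = p0 / (u * (1 - u)) + p1 * t ^ 2 / (v * (1 - v)) := by field_simp

end Inequalities

section Derivative

/-- The trade-off rate `-g' / f'` between the two diagonal entries `f`, `g` of the quantizer's
channel matrix at the posterior level `a`. By Lean's conventions it is `0` at `a = 0`. -/
noncomputable def tradeoffRate (p0 p1 a : ℝ) : ℝ :=
  (1 - a) * p1 / (a * p0)

theorem hasDerivAt_log_div_of_neg {u v : ℝ → ℝ} {u' x : ℝ} (hu : HasDerivAt u u' x)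
    (hv : HasDerivAt v (-u') x) (hu0 : u x ≠ 0) (hv0 : v x ≠ 0) :
    HasDerivAt (fun y => Real.log (u y / v y)) ((u x + v x) * u' / (u x * v x)) x := by
  refine ((hu.fun_div hv hv0).log (div_ne_zero hu0 hv0)).congr_deriv ?_
  field_simp
  ring

theorem hasDerivAt_log_odds {u : ℝ → ℝ} {u' x : ℝ} (hu : HasDerivAt u u' x)
    (hux : u x ∈ Set.Ioo (0 : ℝ) 1) :
    HasDerivAt (fun y => Real.log (u y / (1 - u y))) (u' / (u x * (1 - u x))) x := by
  simpa only [add_sub_cancel, one_mul] using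
    hasDerivAt_log_div_of_neg hu (hu.const_sub 1) hux.1.ne' (sub_pos.2 hux.2).ne'

variable {p0 p1 a : ℝ}

theorem eq_neg_tradeoffRate_mul_of_eq {m n : ℝ} (hp0 : p0 ≠ 0) (hp1 : p1 ≠ 0) (ha0 : a ≠ 0)
    (ha1 : a ≠ 1) (h : m = -(a * p0 / ((1 - a) * p1)) * n) : n = -tradeoffRate p0 p1 a * m := by
  have : 1 - a ≠ 0 := sub_ne_zero.2 ha1.symm
  rw [h, tradeoffRate]
  field_simp

theorem hasDerivAt_tradeoffRate (ha : a ≠ 0) :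
    HasDerivAt (tradeoffRate p0 p1) (-(p1 / (p0 * a ^ 2))) a := by
  have key : HasDerivAt (fun x : ℝ => p1 / p0 * ((1 - x) / x))
      (p1 / p0 * ((-1 * a - (1 - a) * 1) / a ^ 2)) a :=
    (((hasDerivAt_id a).const_sub 1).div (hasDerivAt_id a) ha).const_mul _
  convert key using 1
  · funext x
    simp only [tradeoffRate]
    ring
  · ring

theorem Fq_eq_tradeoffRate (hp0 : p0 ≠ 0) (ha : a ≠ 0) (f g : ℝ → ℝ) :
    Fq p0 p1 f g a =
      Real.log (f a / (1 - f a)) -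
        p1 / p0 * tradeoffRate p0 p1 a * Real.log (g a / (1 - g a)) -
        (1 + p1 / p0 * tradeoffRate p0 p1 a) *
          Real.log ((p0 * f a + p1 * (1 - g a)) / (p0 * (1 - f a) + p1 * g a)) := by
  simp only [Fq, tradeoffRate]
  field_simp
  ring

variable {f g : ℝ → ℝ} {f' g' : ℝ}

theorem hasDerivAt_log_mixture_odds (hp0 : 0 < p0) (hp1 : 0 < p1)
    (hfa : f a ∈ Set.Ioo (0 : ℝ) 1) (hga : g a ∈ Set.Ioo (0 : ℝ) 1)
    (hf : HasDerivAt f f' a) (hg : HasDerivAt g g' a) :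
    HasDerivAt
      (fun x => Real.log ((p0 * f x + p1 * (1 - g x)) / (p0 * (1 - f x) + p1 * g x)))
      ((p0 + p1) * (p0 * f' - p1 * g') /
        ((p0 * f a + p1 * (1 - g a)) * (p0 * (1 - f a) + p1 * g a))) a := by
  have hr : HasDerivAt (fun x => p0 * f x + p1 * (1 - g x)) (p0 * f' - p1 * g') a :=
    ((hf.const_mul p0).add ((hg.const_sub 1).const_mul p1)).congr_deriv (by ring)
  have hr' : HasDerivAt (fun x => p0 * (1 - f x) + p1 * g x) (-(p0 * f' - p1 * g')) a :=
    (((hf.const_sub 1).const_mul p0).add (hg.const_mul p1)).congr_deriv (by ring)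
  refine (hasDerivAt_log_div_of_neg hr hr'
    (mixture_pos hp0 hp1 hfa.1 (sub_pos.2 hga.2)).ne'
    (mixture_pos hp0 hp1 (sub_pos.2 hfa.2) hga.1).ne').congr_deriv ?_
  ring

theorem hasDerivAt_Fq (hp0 : 0 < p0) (hp1 : 0 < p1) (ha : a ≠ 0)
    (hfa : f a ∈ Set.Ioo (0 : ℝ) 1) (hga : g a ∈ Set.Ioo (0 : ℝ) 1)
    (hf : HasDerivAt f f' a) (hg : HasDerivAt g (-tradeoffRate p0 p1 a * f') a) :
    HasDerivAt (Fq p0 p1 f g)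
      (f' / p0 *
          (p0 / (f a * (1 - f a)) + p1 * tradeoffRate p0 p1 a ^ 2 / (g a * (1 - g a)) -
            (p0 + p1) * (p0 + p1 * tradeoffRate p0 p1 a) ^ 2 /
              ((p0 * f a + p1 * (1 - g a)) * (p0 * (1 - f a) + p1 * g a))) +
        p1 ^ 2 / (p0 * a) ^ 2 *
          (Real.log (g a / (1 - g a)) +
            Real.log ((p0 * f a + p1 * (1 - g a)) / (p0 * (1 - f a) + p1 * g a)))) a := by
  have hc := (hasDerivAt_tradeoffRate (p0 := p0) (p1 := p1) ha).const_mul (p1 / p0)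
  have hF := ((hasDerivAt_log_odds hf hfa).sub (hc.mul (hasDerivAt_log_odds hg hga))).sub
    ((hc.const_add 1).mul (hasDerivAt_log_mixture_odds hp0 hp1 hfa hga hf hg))
  refine (hF.congr_of_eventuallyEq ?_).congr_deriv ?_
  · filter_upwards [isOpen_ne.mem_nhds ha] with x hx
    exact Fq_eq_tradeoffRate hp0.ne' hx f g
  · generalize tradeoffRate p0 p1 a = t
    have := hp0.ne'
    field_simp
    ring

end Derivative

theorem stmt_12_general
    {p0 p1 : ℝ} (hp0 : 0 < p0) (hp1 : 0 < p1)
    {s : Set ℝ} (hs : Convex ℝ s) (hs0 : (0 : ℝ) ∉ s)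
    {f g f' : ℝ → ℝ}
    (hfmem : ∀ a ∈ s, f a ∈ Set.Ioo (0 : ℝ) 1)
    (hgmem : ∀ a ∈ s, g a ∈ Set.Ioo (0 : ℝ) 1)
    (hfg : ∀ a ∈ s, 1 ≤ f a + g a)
    (hfd : ∀ a ∈ s, HasDerivAt f (f' a) a)
    (hgd : ∀ a ∈ s, HasDerivAt g (-tradeoffRate p0 p1 a * f' a) a)
    (hf' : ∀ a ∈ s, 0 ≤ f' a) :
    (∀ a ∈ s, DifferentiableAt ℝ (Fq p0 p1 f g) a ∧ 0 ≤ deriv (Fq p0 p1 f g) a) ∧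
      MonotoneOn (Fq p0 p1 f g) s := by
  have hderiv : ∀ a ∈ s, DifferentiableAt ℝ (Fq p0 p1 f g) a ∧ 0 ≤ deriv (Fq p0 p1 f g) a := by
    intro a ha
    have hF := hasDerivAt_Fq hp0 hp1 (ne_of_mem_of_not_mem ha hs0) (hfmem a ha) (hgmem a ha)
      (hfd a ha) (hgd a ha)
    have hvar := sq_div_mixture_variance_le hp0 hp1 (hfmem a ha) (hgmem a ha)
      (tradeoffRate p0 p1 a)
    have hlog := log_odds_add_log_mixture_odds_nonneg hp0 hp1 (hfmem a ha) (hgmem a ha) (hfg a ha)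
    refine ⟨hF.differentiableAt, hF.deriv ▸ add_nonneg ?_ ?_⟩
    · exact mul_nonneg (div_nonneg (hf' a ha) hp0.le) (sub_nonneg.2 hvar)
    · exact mul_nonneg (by positivity) hlog
  refine ⟨hderiv, monotoneOn_of_deriv_nonneg hs ?_ ?_ ?_⟩
  · exact fun a ha => (hderiv a ha).1.continuousAt.continuousWithinAt
  · exact fun a ha => (hderiv a (interior_subset ha)).1.differentiableWithinAt
  · exact fun a ha => (hderiv a (interior_subset ha)).2

/-- under the listed hypotheses on `f` and `g`, the function `F` is
differentiable with nonnegative derivative on `(0,1)`, hence nondecreasing there. -/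
theorem stmt_12
    (p0 p1 : ℝ) (hp0 : p0 ∈ Set.Ioo (0:ℝ) 1) (hp1 : p1 ∈ Set.Ioo (0:ℝ) 1)
    (hp : p0 + p1 = 1)
    (f g f' g' : ℝ → ℝ)
    (hfmem : ∀ a ∈ Set.Ioo (0:ℝ) 1, f a ∈ Set.Ioo (0:ℝ) 1)
    (hgmem : ∀ a ∈ Set.Ioo (0:ℝ) 1, g a ∈ Set.Ioo (0:ℝ) 1)
    (hfg : ∀ a ∈ Set.Ioo (0:ℝ) 1, 1 ≤ f a + g a)
    (hfd : ∀ a ∈ Set.Ioo (0:ℝ) 1, HasDerivAt f (f' a) a)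
    (hgd : ∀ a ∈ Set.Ioo (0:ℝ) 1, HasDerivAt g (g' a) a)
    (hf'pos : ∀ a ∈ Set.Ioo (0:ℝ) 1, 0 < f' a)
    (hrel : ∀ a ∈ Set.Ioo (0:ℝ) 1, f' a = -(a * p0 / ((1 - a) * p1)) * g' a) :
    (∀ a ∈ Set.Ioo (0:ℝ) 1,
      DifferentiableAt ℝ (Fq p0 p1 f g) a ∧ 0 ≤ deriv (Fq p0 p1 f g) a) ∧
    MonotoneOn (Fq p0 p1 f g) (Set.Ioo 0 1) := by
  have hg' : ∀ a ∈ Set.Ioo (0 : ℝ) 1, g' a = -tradeoffRate p0 p1 a * f' a := fun a ha =>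
    eq_neg_tradeoffRate_mul_of_eq hp0.1.ne' hp1.1.ne' ha.1.ne' ha.2.ne (hrel a ha)
  exact stmt_12_general hp0.1 hp1.1 (convex_Ioo 0 1) (fun h => h.1.false) hfmem hgmem hfg hfd
    (fun a ha => hg' a ha ▸ hgd a ha) fun a ha => (hf'pos a ha).le
end
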